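/- arXiv:math/9807135 — 4 statements merged into one kernel-verified Lean document; each statement's English description precedes it below -/
import Mathlib

section
/- Let B ⊆ ℤ² be finite and nonempty with connected components B_1, …, B_n, let 1 ≤ m < n, and set B⁺ = B_1 ∪ … ∪ B_m and B⁻ = B_{m+1} ∪ … ∪ B_n. Then the following decoupling inequality holds: inf over A ∈ 𝒟_B with finite complement of Σ_{C ⊆ B} e^{J|C|} Z(A ∪ C)/Z(A) is at least the product of inf over A ∈ 𝒟_{B⁺} with finite complement of Σ_{C ⊆ B⁺} e^{J|C|} Z(A ∪ C)/Z(A), times inf over A ∈ 𝒟_{B⁻} with finite complement of Σ_{C ⊆ B⁻} e^{J|C|} Z(A ∪ C)/Z(A). -/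
open MeasureTheory Real
open Classical

namespace DeltaPinning

/-- Sites of the lattice `ℤ²`. -/
abbrev Site : Type := ℤ × ℤ

/-- The `ℓ¹`-distance on `ℤ²`. -/
def dist1 (i j : Site) : ℕ := (i.1 - j.1).natAbs + (i.2 - j.2).natAbs

/-- Nearest-neighbour adjacency on `ℤ²`. -/
def adj (i j : Site) : Prop := dist1 i j = 1

/-- The `ℓ^∞`-norm on `ℤ²`. -/
def normInf (i : Site) : ℕ := max i.1.natAbs i.2.natAbs

/-- `ℓ¹`-distance from a site to a set. -/
noncomputable def dInf (i : Site) (A : Set Site) : ℕ := sInf {n | ∃ j ∈ A, dist1 i j = n}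

/-- `x` and `y` are connected by a nearest-neighbour path inside `B`. -/
def connectedIn (B : Set Site) (x y : Site) : Prop :=
  ∃ (n : ℕ) (p : ℕ → Site), p 0 = x ∧ p n = y ∧ (∀ m ≤ n, p m ∈ B) ∧
    ∀ m < n, adj (p m) (p (m + 1))

/-- The connected component of `x` inside `B`. -/
def component (B : Set Site) (x : Site) : Set Site := {y | connectedIn B x y}

/-- `C` is a connected component of `B`. -/
def IsComponent (B C : Set Site) : Prop := ∃ x ∈ B, C = component B x

/-- `B` is a connected set (w.r.t. nearest-neighbour adjacency). -/
def IsConnSet (B : Set Site) : Prop := ∀ x ∈ B, ∀ y ∈ B, connectedIn B x y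

/-- Exterior boundary of a set. -/
def extBd (C : Set Site) : Set Site := {i | i ∉ C ∧ ∃ j ∈ C, adj i j}

/-- `A` is a dry neighbour of `B` : `A ∩ B = ∅` and `A` meets the exterior boundary of
every connected component of `B`. -/
def dryNbr (B A : Set Site) : Prop :=
  A ∩ B = ∅ ∧ ∀ C : Set Site, IsComponent B C → (A ∩ extBd C).Nonempty

/-- `k`-enlargement of a set `D`. -/
def enl (D : Set Site) (k : ℕ) : Set Site := {i | ∃ j ∈ D, dist1 i j ≤ k}

/-- A tuple `κ` is admissible w.r.t. the components `Bc 0, …, Bc (n-1)`. -/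
def admissible {n : ℕ} (Bc : Fin n → Set Site) (κ : Fin n → ℕ) : Prop :=
  ∀ l : Fin n, 0 < (l : ℕ) →
    (κ l = 0 ∨
      enl (Bc l) (κ l) ∩ (⋃ m : Fin n, ⋃ (_ : (m : ℕ) < (l : ℕ)), enl (Bc m) (κ m)) = ∅)

/-- The union `B^{(κ)}` of the enlarged components. -/
def enlUnion {n : ℕ} (Bc : Fin n → Set Site) (κ : Fin n → ℕ) : Set Site :=
  ⋃ l : Fin n, enl (Bc l) (κ l)

/-- The box of radius `l` (in `ℓ^∞`-norm) centered at `x`. -/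
def blk (l : ℕ) (x : Site) : Set Site := {y | normInf (y - x) ≤ l}

/-- The four nearest neighbours of a site. -/
def nbrs (y : Site) : Finset Site :=
  {y + ((1 : ℤ), (0 : ℤ)), y + (-1, 0), y + (0, 1), y + (0, -1)}

/-- `γ` is a nearest-neighbour path of the renormalized lattice `(2l+1)ℤ²` (written in
renormalized coordinates) starting at `0`, leaving the box of radius `l·r` exactly at its
last point; i.e. an element of `Γ^l(r)`. -/
def pathInGamma (l r : ℕ) {k : ℕ} (γ : Fin (k + 1) → Site) : Prop :=
  γ 0 = 0 ∧ (∀ m : Fin k, adj (γ m.castSucc) (γ m.succ)) ∧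
    l * r < normInf ((2 * (l : ℤ) + 1) • γ (Fin.last k)) ∧
    ∀ m : Fin (k + 1), m ≠ Fin.last k → normInf ((2 * (l : ℤ) + 1) • γ m) ≤ l * r

/-- The path `γ` is `(r,ε)`-clean in `A`: strictly fewer than `ε·r` of its vertices `x` are
such that the block `𝐁((2l+1)x, l)` meets `A`. -/
noncomputable def cleanIn (l r : ℕ) (ε : ℝ) {k : ℕ} (γ : Fin (k + 1) → Site)
    (A : Set Site) : Prop :=
  ((((Finset.univ.image γ)).filter
      fun x => (blk l ((2 * (l : ℤ) + 1) • x) ∩ A).Nonempty).card : ℝ) < ε * r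

/-- `A` is `(r,ε)`-clean: some path of `Γ^l(r)` is `(r,ε)`-clean in `A`. -/
def isClean (l r : ℕ) (ε : ℝ) (A : Set Site) : Prop :=
  ∃ (k : ℕ) (γ : Fin (k + 1) → Site), pathInGamma l r γ ∧ cleanIn l r ε γ A

/-- Extension of a configuration on `Aᶜ` by `0` on `A`. -/
noncomputable def extZ (A : Set Site) (η : ↥(Aᶜ) → ℝ) : Site → ℝ :=
  fun i => if h : i ∈ Aᶜ then η ⟨i, h⟩ else 0

/-- Hamiltonian `H_A(φ)`: sum of `V(φ_i - φ_j)` over unordered nearest-neighbour pairs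
`{i,j}` meeting `Aᶜ` (each unordered pair appears as two ordered pairs, whence `1/2`). -/
noncomputable def ham (V : ℝ → ℝ) (A : Set Site) (φ : Site → ℝ) : ℝ :=
  (1 / 2) * ∑ᶠ p : Site × Site,
    if adj p.1 p.2 ∧ (p.1 ∉ A ∨ p.2 ∉ A) then V (φ p.1 - φ p.2) else 0

/-- Partition function `Z(A)` (defined when `Aᶜ` is finite, junk value `0` otherwise). -/
noncomputable def Zpart (V : ℝ → ℝ) (A : Set Site) : ℝ :=
  if h : (Aᶜ : Set Site).Finite then
    letI := h.fintype
    ∫ η : ↥(Aᶜ) → ℝ, Real.exp (- ham V A (extZ A η))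
  else 0

/-- Expectation of `f` (a function of the by-`0`-extended field) under the Gibbs
measure `ℙ_A`. -/
noncomputable def gibbsExp (V : ℝ → ℝ) (A : Set Site) (f : (Site → ℝ) → ℝ) : ℝ :=
  if h : (Aᶜ : Set Site).Finite then
    letI := h.fintype
    (∫ η : ↥(Aᶜ) → ℝ, f (extZ A η) * Real.exp (- ham V A (extZ A η))) / Zpart V A
  else 0

/-- The box `Λ_N = ([-N,N] ∩ ℤ)²`. -/
noncomputable def Lam (N : ℕ) : Finset Site := Finset.Icc (-(N : ℤ)) N ×ˢ Finset.Icc (-(N : ℤ)) N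

/-- `Ā = A ∪ (ℤ² ∖ Λ_N)`. -/
def bar (N : ℕ) (A : Finset Site) : Set Site := ↑A ∪ (↑(Lam N) : Set Site)ᶜ

/-- Unnormalized pinning weight `e^{J|A|} Z(Ā)`. -/
noncomputable def wt (V : ℝ → ℝ) (J : ℝ) (N : ℕ) (A : Finset Site) : ℝ :=
  Real.exp (J * A.card) * Zpart V (bar N A)

/-- Pinning weights `ρ(A)`, `A ⊆ Λ_N`. -/
noncomputable def rho (V : ℝ → ℝ) (J : ℝ) (N : ℕ) (A : Finset Site) : ℝ :=
  wt V J N A / ∑ D ∈ (Lam N).powerset, wt V J N D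

/-- Extension of a configuration on `Λ_N` by `0` outside. -/
noncomputable def extF (N : ℕ) (φ : ↥(Lam N) → ℝ) : Site → ℝ :=
  fun i => if h : i ∈ Lam N then φ ⟨i, h⟩ else 0

/-- The base measure `∏_{i ∈ Λ_N} (dφ_i + e^J δ_0(dφ_i))`. -/
noncomputable def pinnedBase (J : ℝ) (N : ℕ) : Measure (↥(Lam N) → ℝ) :=
  Measure.pi fun _ => (volume : Measure ℝ) + ENNReal.ofReal (Real.exp J) • Measure.dirac 0

/-- The unnormalized δ-pinned measure `e^{-H(φ)} ∏_{i∈Λ_N}(dφ_i + e^J δ_0(dφ_i))`. -/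
noncomputable def pinnedRaw (V : ℝ → ℝ) (J : ℝ) (N : ℕ) : Measure (↥(Lam N) → ℝ) :=
  (pinnedBase J N).withDensity fun φ =>
    ENNReal.ofReal (Real.exp (- ham V ((↑(Lam N) : Set Site)ᶜ) (extF N φ)))

/-- The δ-pinned measure `P̂_N`. -/
noncomputable def pinned (V : ℝ → ℝ) (J : ℝ) (N : ℕ) : Measure (↥(Lam N) → ℝ) :=
  (pinnedRaw V J N Set.univ)⁻¹ • pinnedRaw V J N

/-- Base measure for `ℙ̃_Ā`: Dirac mass at `0` at every coordinate of `A`, Lebesgue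
elsewhere. -/
noncomputable def tildeBase (N : ℕ) (A : Finset Site) : Measure (↥(Lam N) → ℝ) :=
  Measure.pi fun i => if (i : Site) ∈ A then Measure.dirac 0 else (volume : Measure ℝ)

/-- Unnormalized version of `ℙ̃_Ā`. -/
noncomputable def tildeRaw (V : ℝ → ℝ) (N : ℕ) (A : Finset Site) :
    Measure (↥(Lam N) → ℝ) :=
  (tildeBase N A).withDensity fun φ =>
    ENNReal.ofReal (Real.exp (- ham V (bar N A) (extF N φ)))

/-- The measure `ℙ̃_Ā` on `ℝ^{Λ_N}`: the Gibbs measure `ℙ_Ā` with Dirac mass `δ_0`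
placed at every coordinate in `A`. -/
noncomputable def tildeP (V : ℝ → ℝ) (N : ℕ) (A : Finset Site) :
    Measure (↥(Lam N) → ℝ) :=
  (tildeRaw V N A Set.univ)⁻¹ • tildeRaw V N A

/-- The sum `Σ_{C ⊆ B} e^{J|C|} Z(A ∪ C)/Z(A)`. -/
noncomputable def drySum (V : ℝ → ℝ) (J : ℝ) (B : Finset Site) (A : Set Site) : ℝ :=
  ∑ C ∈ B.powerset, Real.exp (J * C.card) * (Zpart V (A ∪ ↑C) / Zpart V A)

/-- `inf_{A ∈ 𝒟_B, |Aᶜ| < ∞} Σ_{C ⊆ B} e^{J|C|} Z(A ∪ C)/Z(A)`. -/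
noncomputable def dryInf (V : ℝ → ℝ) (J : ℝ) (B : Finset Site) : ℝ :=
  sInf (drySum V J B '' {A : Set Site | dryNbr ↑B A ∧ (Aᶜ : Set Site).Finite})

lemma connectedIn_iff (B : Set Site) (x y : Site) :
    connectedIn B x y ↔ x ∈ B ∧ Relation.ReflTransGen (fun a b => a ∈ B ∧ b ∈ B ∧ adj a b) x y := by
  constructor
  · rintro ⟨n, p, h0, hn, hB, ha⟩
    refine ⟨h0 ▸ hB 0 (Nat.zero_le _), ?_⟩
    have key : ∀ k ≤ n, Relation.ReflTransGen (fun a b => a ∈ B ∧ b ∈ B ∧ adj a b) x (p k) := by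
      intro k
      induction k with
      | zero => intro _; rw [h0]
      | succ k ih =>
        intro hk
        exact (ih (by omega)).tail ⟨hB k (by omega), hB (k + 1) hk, ha k (by omega)⟩
    rw [← hn]
    exact key n le_rfl
  · rintro ⟨hx, h⟩
    induction h with
    | refl =>
      exact ⟨0, fun _ => x, rfl, rfl, fun _ _ => hx, fun m hm => absurd hm (Nat.not_lt_zero _)⟩
    | @tail b c _ hbc ih =>
      obtain ⟨n, p, h0, hn, hB, ha⟩ := ih
      refine ⟨n + 1, fun k => if k ≤ n then p k else c, by simp [h0], by simp, ?_, ?_⟩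
      · intro k hk
        by_cases h : k ≤ n
        · simpa [h] using hB k h
        · simpa [h] using hbc.2.1
      · intro k hk
        by_cases h : k < n
        · have h1 : k ≤ n := h.le
          have h2 : k + 1 ≤ n := h
          simpa [h1, h2] using ha k h
        · have h1 : k = n := by omega
          subst h1
          simpa [hn] using hbc.2.2

lemma adj_symm {x y : Site} (h : adj x y) : adj y x := by
  unfold adj dist1 at *
  omega

lemma connectedIn_symm {B : Set Site} {x y : Site} (h : connectedIn B x y) :
    connectedIn B y x := by
  rw [connectedIn_iff] at *
  obtain ⟨hx, h⟩ := h
  induction h with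
  | refl => exact ⟨hx, .refl⟩
  | tail _ hbc ih => exact ⟨hbc.2.1, .head ⟨hbc.2.1, hbc.1, adj_symm hbc.2.2⟩ ih.2⟩

lemma connectedIn_trans {B : Set Site} {x y z : Site} (h : connectedIn B x y)
    (h' : connectedIn B y z) : connectedIn B x z := by
  rw [connectedIn_iff] at *
  exact ⟨h.1, h.2.trans h'.2⟩

lemma connectedIn_self {B : Set Site} {x : Site} (h : x ∈ B) : connectedIn B x x := by
  rw [connectedIn_iff]
  exact ⟨h, .refl⟩

lemma connectedIn_left {B : Set Site} {x y : Site} (h : connectedIn B x y) : x ∈ B :=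
  ((connectedIn_iff _ _ _).1 h).1

lemma connectedIn_mono {S B : Set Site} (hS : S ⊆ B) {x y : Site} (h : connectedIn S x y) :
    connectedIn B x y := by
  obtain ⟨n, p, h0, hn, hB, ha⟩ := h
  exact ⟨n, p, h0, hn, fun m hm => hS (hB m hm), ha⟩

lemma component_eq {B : Set Site} {x y : Site} (h : connectedIn B y x) :
    component B y = component B x := by
  ext z
  exact ⟨fun hz => connectedIn_trans (connectedIn_symm h) hz, fun hz => connectedIn_trans h hz⟩

/-- A component of a union of components is a component. -/
lemma isComponent_of_closed {S B : Set Site} (hS : S ⊆ B)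
    (hcl : ∀ x ∈ S, component B x ⊆ S) {C : Set Site} (hC : IsComponent S C) :
    IsComponent B C := by
  obtain ⟨x, hx, rfl⟩ := hC
  refine ⟨x, hS hx, ?_⟩
  ext y
  refine ⟨fun h => connectedIn_mono hS h, ?_⟩
  rintro ⟨n, p, h0, hn, hB, ha⟩
  refine ⟨n, p, h0, hn, fun k hk => hcl x hx ?_, ha⟩
  exact ⟨k, p, h0, rfl, fun j hj => hB j (hj.trans hk), fun j hj => ha j (hj.trans_le hk)⟩

lemma dryNbr_of_closed {S B A A' : Set Site} (hS : S ⊆ B)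
    (hcl : ∀ x ∈ S, component B x ⊆ S) (hA : dryNbr B A) (hAA : A ⊆ A') (hd : A' ∩ S = ∅) :
    dryNbr S A' := by
  refine ⟨hd, fun C hC => ?_⟩
  exact (hA.2 C (isComponent_of_closed hS hcl hC)).mono (Set.inter_subset_inter_left _ hAA)

lemma exists_dry (B : Finset Site) :
    dryNbr (↑B) ((↑B : Set Site)ᶜ) ∧ ((((↑B : Set Site)ᶜ)ᶜ : Set Site)).Finite := by
  refine ⟨⟨by simp, ?_⟩, by simp⟩
  rintro C ⟨x, hx, rfl⟩
  have hsub : component (↑B) x ⊆ (↑B : Set Site) := fun y hy =>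
    connectedIn_left (connectedIn_symm hy)
  have hfin : (component (↑B) x).Finite := B.finite_toSet.subset hsub
  obtain ⟨y, hy, hmax⟩ := hfin.exists_maximalFor (fun z : Site => z.1) _
    ⟨x, connectedIn_self hx⟩
  have hadj : adj y (y + ((1 : ℤ), (0 : ℤ))) := by
    simp [adj, dist1]
  have hnot : y + ((1 : ℤ), (0 : ℤ)) ∉ component (↑B) x := by
    intro h
    have := hmax h (by simp)
    simp at this
  refine ⟨y + ((1 : ℤ), (0 : ℤ)), ?_, hnot, y, hy, adj_symm hadj⟩
  intro hmem
  apply hnot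
  refine connectedIn_trans hy ?_
  rw [connectedIn_iff]
  exact ⟨hsub hy, .single ⟨hsub hy, hmem, hadj⟩⟩

lemma Zpart_nonneg (V : ℝ → ℝ) (A : Set Site) : 0 ≤ Zpart V A := by
  unfold Zpart
  split_ifs with h
  · exact integral_nonneg fun _ => (Real.exp_pos _).le
  · exact le_rfl

lemma drySum_nonneg (V : ℝ → ℝ) (J : ℝ) (B : Finset Site) (A : Set Site) :
    0 ≤ drySum V J B A :=
  Finset.sum_nonneg fun _ _ => mul_nonneg (Real.exp_pos _).le
    (div_nonneg (Zpart_nonneg _ _) (Zpart_nonneg _ _))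

lemma dryInf_nonneg (V : ℝ → ℝ) (J : ℝ) (B : Finset Site) : 0 ≤ dryInf V J B := by
  apply Real.sInf_nonneg
  rintro _ ⟨A, _, rfl⟩
  exact drySum_nonneg _ _ _ _

lemma dryInf_le (V : ℝ → ℝ) (J : ℝ) (B : Finset Site) {A : Set Site} (h : dryNbr ↑B A)
    (hf : (Aᶜ : Set Site).Finite) : dryInf V J B ≤ drySum V J B A := by
  refine csInf_le ⟨0, ?_⟩ ⟨A, ⟨h, hf⟩, rfl⟩
  rintro _ ⟨A, _, rfl⟩
  exact drySum_nonneg _ _ _ _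

lemma drySum_union (V : ℝ → ℝ) (J : ℝ) (P M : Finset Site) (hd : Disjoint P M) (A : Set Site) :
    drySum V J (P ∪ M) A = ∑ C ∈ P.powerset, ∑ D ∈ M.powerset,
      Real.exp (J * C.card) * (Real.exp (J * D.card) *
        (Zpart V (A ∪ ↑C ∪ ↑D) / Zpart V A)) := by
  unfold drySum
  rw [← Finset.sum_product']
  refine Finset.sum_bij' (fun C _ => (C ∩ P, C ∩ M)) (fun q _ => q.1 ∪ q.2) ?_ ?_ ?_ ?_ ?_
  · intro C _
    simp
  · rintro ⟨C, D⟩ h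
    simp only [Finset.mem_product, Finset.mem_powerset] at h ⊢
    exact Finset.union_subset_union h.1 h.2
  · intro C h
    rw [Finset.mem_powerset] at h
    simp only
    rw [← Finset.inter_union_distrib_left, Finset.inter_eq_left.2 h]
  · rintro ⟨C, D⟩ h
    simp only [Finset.mem_product, Finset.mem_powerset] at h
    have hPM := Finset.disjoint_left.1 hd
    ext x
    · simp only [Finset.mem_inter, Finset.mem_union]
      have h1 := @h.1 x
      have h2 := @h.2 x
      have h3 := @hPM x
      tauto
    · simp only [Finset.mem_inter, Finset.mem_union]
      have h1 := @h.1 x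
      have h2 := @h.2 x
      have h3 := @hPM x
      tauto
  · intro C h
    rw [Finset.mem_powerset] at h
    have hC : C ∩ P ∪ C ∩ M = C := by
      rw [← Finset.inter_union_distrib_left, Finset.inter_eq_left.2 h]
    have hdd : Disjoint (C ∩ P) (C ∩ M) :=
      hd.mono Finset.inter_subset_right Finset.inter_subset_right
    have hcard : C.card = (C ∩ P).card + (C ∩ M).card := by
      rw [← Finset.card_union_of_disjoint hdd, hC]
    have hset : A ∪ ↑(C ∩ P) ∪ ↑(C ∩ M) = A ∪ (↑C : Set Site) := by
      rw [Set.union_assoc, ← Finset.coe_union, hC]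
    simp only [hset]
    rw [← mul_assoc, ← Real.exp_add, hcard]
    push_cast
    rw [mul_add]

/-- The decoupling inequality for one dry neighbour. -/
lemma decouple (V : ℝ → ℝ) (J : ℝ) (P M : Finset Site) (hd : Disjoint P M) (A : Set Site)
    (hA : (Aᶜ : Set Site).Finite) (hP : dryNbr ↑P A)
    (hM : ∀ C : Finset Site, C ⊆ P → dryNbr ↑M (A ∪ ↑C)) :
    dryInf V J P * dryInf V J M ≤ drySum V J (P ∪ M) A := by
  rw [drySum_union V J P M hd]
  refine (mul_le_mul_of_nonneg_right (dryInf_le V J P hP hA) (dryInf_nonneg V J M)).trans ?_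
  unfold drySum
  rw [Finset.sum_mul]
  refine Finset.sum_le_sum fun C hC => ?_
  rw [Finset.mem_powerset] at hC
  rw [← Finset.mul_sum, mul_assoc]
  refine mul_le_mul_of_nonneg_left ?_ (Real.exp_pos _).le
  by_cases hz : Zpart V (A ∪ ↑C) = 0
  · rw [hz, zero_div, zero_mul]
    exact Finset.sum_nonneg fun _ _ => mul_nonneg (Real.exp_pos _).le
      (div_nonneg (Zpart_nonneg _ _) (Zpart_nonneg _ _))
  · have hf : ((A ∪ ↑C)ᶜ : Set Site).Finite :=
      hA.subset (Set.compl_subset_compl.2 Set.subset_union_left)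
    refine (mul_le_mul_of_nonneg_left (dryInf_le V J M (hM C hC) hf)
      (div_nonneg (Zpart_nonneg _ _) (Zpart_nonneg _ _))).trans (le_of_eq ?_)
    unfold drySum
    rw [Finset.mul_sum]
    refine Finset.sum_congr rfl fun D _ => ?_
    field_simp

/-- eq. (19): decoupling inequality for the infima of
`Σ_{C ⊆ B} e^{J|C|} Z(A∪C)/Z(A)` over dry neighbours, upon splitting the connected
components of `B` into two groups. -/
theorem statement6
    (c_V : ℝ) (hcV : 1 ≤ c_V) (V : ℝ → ℝ)
    (hVsmooth : ContDiff ℝ (⊤ : ℕ∞) V) (hVeven : ∀ t, V (-t) = V t)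
    (hVlb : ∀ t, 1 / c_V ≤ iteratedDeriv 2 V t)
    (hVub : ∀ t, iteratedDeriv 2 V t ≤ c_V)
    (J : ℝ) (B Bp Bm : Finset Site) (hB : B.Nonempty)
    (n : ℕ) (Bc : Fin n → Set Site)
    (hcomp : ∀ l : Fin n, IsComponent (↑B) (Bc l))
    (hinj : Function.Injective Bc)
    (hsurj : ∀ C : Set Site, IsComponent (↑B) C → ∃ l : Fin n, Bc l = C)
    (m : ℕ) (hm1 : 1 ≤ m) (hmn : m < n)
    (hBp : (↑Bp : Set Site) = ⋃ l : Fin n, ⋃ (_ : (l : ℕ) < m), Bc l)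
    (hBm : (↑Bm : Set Site) = ⋃ l : Fin n, ⋃ (_ : m ≤ (l : ℕ)), Bc l) :
    dryInf V J Bp * dryInf V J Bm ≤ dryInf V J B := by
  have hl : ∀ l, ∀ x ∈ Bc l, x ∈ (↑B : Set Site) ∧ component (↑B) x = Bc l := by
    intro l x hx
    obtain ⟨y, hy, h⟩ := hcomp l
    rw [h] at hx ⊢
    exact ⟨connectedIn_left (connectedIn_symm hx), (component_eq hx).symm⟩
  have hmemP : ∀ x, x ∈ Bp ↔ ∃ l : Fin n, (l : ℕ) < m ∧ x ∈ Bc l := by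
    intro x
    rw [← Finset.mem_coe, hBp]
    simp
  have hmemM : ∀ x, x ∈ Bm ↔ ∃ l : Fin n, m ≤ (l : ℕ) ∧ x ∈ Bc l := by
    intro x
    rw [← Finset.mem_coe, hBm]
    simp
  have hd : Disjoint Bp Bm := by
    rw [Finset.disjoint_left]
    intro x hx hx'
    obtain ⟨l, h1, h2⟩ := (hmemP x).1 hx
    obtain ⟨k, h3, h4⟩ := (hmemM x).1 hx'
    have : l = k := hinj ((hl l x h2).2.symm.trans (hl k x h4).2)
    subst this
    omega
  have hU : B = Bp ∪ Bm := by
    ext x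
    rw [Finset.mem_union, hmemP, hmemM]
    constructor
    · intro hx
      obtain ⟨l, h⟩ := hsurj (component (↑B) x) ⟨x, hx, rfl⟩
      have hx' : x ∈ Bc l := by
        rw [h]
        exact connectedIn_self hx
      rcases lt_or_ge (l : ℕ) m with h1 | h1
      · exact Or.inl ⟨l, h1, hx'⟩
      · exact Or.inr ⟨l, h1, hx'⟩
    · rintro (⟨l, _, h⟩ | ⟨l, _, h⟩)
      · exact (hl l x h).1
      · exact (hl l x h).1
  have hPB : (↑Bp : Set Site) ⊆ ↑B := by
    rw [hU]
    simp
  have hMB : (↑Bm : Set Site) ⊆ ↑B := by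
    rw [hU]
    simp
  have hPcl : ∀ x ∈ (↑Bp : Set Site), component (↑B) x ⊆ ↑Bp := by
    intro x hx y hy
    obtain ⟨l, h1, h2⟩ := (hmemP x).1 hx
    rw [(hl l x h2).2] at hy
    exact (hmemP y).2 ⟨l, h1, hy⟩
  have hMcl : ∀ x ∈ (↑Bm : Set Site), component (↑B) x ⊆ ↑Bm := by
    intro x hx y hy
    obtain ⟨l, h1, h2⟩ := (hmemM x).1 hx
    rw [(hl l x h2).2] at hy
    exact (hmemM y).2 ⟨l, h1, hy⟩
  refine le_csInf ⟨_, _, exists_dry B, rfl⟩ ?_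
  rintro _ ⟨A, ⟨hA, hf⟩, rfl⟩
  have hdis : ∀ x ∈ A, x ∉ B := fun x hx hxB => by
    have : x ∈ A ∩ (↑B : Set Site) := ⟨hx, hxB⟩
    rw [hA.1] at this
    exact this
  have key := decouple V J Bp Bm hd A hf
    (dryNbr_of_closed hPB hPcl hA subset_rfl (by
      rw [Set.eq_empty_iff_forall_notMem]
      rintro x ⟨h1, h2⟩
      exact hdis x h1 (hPB h2)))
    (fun C hC => dryNbr_of_closed hMB hMcl hA Set.subset_union_left (by
      rw [Set.eq_empty_iff_forall_notMem]
      rintro x ⟨h1 | h1, h2⟩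
      · exact hdis x h1 (hMB h2)
      · exact Finset.disjoint_left.1 hd (hC h1) h2))
  rwa [← hU] at key


end DeltaPinning
end

section
/- Let c₆ > 0 and suppose that Z(A' ∪ {i})/Z(A') ≥ c₆/√(d(i,A')) for every nonempty A' ⊆ ℤ² with finite complement and every i ∉ A', where d(i,A') = min_{j∈A'} ‖i − j‖₁. Let M ∈ ℕ, let B ⊆ ℤ² be finite, connected and nonempty with ℓ¹-diameter strictly less than M, let A ∈ 𝒟_B have finite complement, and let C ⊆ B. Then Z(A ∪ C)/Z(A) ≥ (c₆/√(2M+1))^{|C|}. -/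
open MeasureTheory Real
open Classical

namespace DeltaPinning

/-- iterating the single-site bound of Statement 8 along a small connected
component gives `Z(A∪C)/Z(A) ≥ (c₆/√(2M+1))^{|C|}`. -/
theorem statement9
    (c_V : ℝ) (hcV : 1 ≤ c_V) (V : ℝ → ℝ)
    (hVsmooth : ContDiff ℝ (⊤ : ℕ∞) V) (hVeven : ∀ t, V (-t) = V t)
    (hVlb : ∀ t, 1 / c_V ≤ iteratedDeriv 2 V t)
    (hVub : ∀ t, iteratedDeriv 2 V t ≤ c_V)
    (c₆ : ℝ) (hc₆ : 0 < c₆)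
    (hyp : ∀ A' : Set Site, A'.Nonempty → (A'ᶜ : Set Site).Finite →
      ∀ i ∉ A', c₆ / Real.sqrt (dInf i A' : ℝ) ≤ Zpart V (A' ∪ {i}) / Zpart V A')
    (M : ℕ) (B : Finset Site) (hB : B.Nonempty) (hconn : IsConnSet (↑B : Set Site))
    (hdiam : ∀ x ∈ B, ∀ y ∈ B, dist1 x y < M)
    (A : Set Site) (hA : dryNbr (↑B) A) (hAc : (Aᶜ : Set Site).Finite)
    (C : Finset Site) (hC : C ⊆ B) :
    (c₆ / Real.sqrt (2 * (M : ℝ) + 1)) ^ C.card ≤ Zpart V (A ∪ ↑C) / Zpart V A := by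
  have hdj : A ∩ ↑B = ∅ := hA.1
  obtain ⟨b, hb⟩ := hB
  obtain ⟨j, hjA, -, k, hk, hjk⟩ := hA.2 (component (↑B) b) ⟨b, hb, rfl⟩
  have hkB : k ∈ B := by
    obtain ⟨n, p, -, h2, h3, -⟩ := hk
    have := h3 n le_rfl
    rw [h2] at this
    exact this
  -- single-step estimate
  have key : ∀ D : Finset Site, ∀ i ∈ B, i ∉ D →
      c₆ / Real.sqrt (2 * (M : ℝ) + 1) ≤ Zpart V (A ∪ ↑D ∪ {i}) / Zpart V (A ∪ ↑D) := by
    intro D i hi hiD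
    have hiA : i ∉ A := fun h => by
      have : i ∈ A ∩ (↑B : Set Site) := ⟨h, hi⟩
      rw [hdj] at this
      exact this
    have hiAD : i ∉ A ∪ (↑D : Set Site) := by
      rintro (h | h)
      · exact hiA h
      · exact hiD h
    have hle : dInf i (A ∪ ↑D) ≤ M := by
      have h1 : dInf i (A ∪ ↑D) ≤ dist1 i j := Nat.sInf_le ⟨j, Or.inl hjA, rfl⟩
      have h2 := hdiam i hi k hkB
      unfold adj at hjk
      unfold dist1 at *
      omega
    have hpos : 0 < dInf i (A ∪ ↑D) := by
      have hne : {n | ∃ j ∈ A ∪ (↑D : Set Site), dist1 i j = n}.Nonempty :=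
        ⟨_, j, Or.inl hjA, rfl⟩
      obtain ⟨l, hl, hl2⟩ := Nat.sInf_mem hne
      rcases Nat.eq_zero_or_pos (dInf i (A ∪ ↑D)) with h0 | h0
      · exfalso
        have h3 : dist1 i l = 0 := hl2.trans h0
        have : i = l := by
          unfold dist1 at h3
          ext <;> omega
        exact hiAD (this ▸ hl)
      · exact h0
    refine le_trans ?_ (hyp (A ∪ ↑D) ⟨j, Or.inl hjA⟩
      (hAc.subset (Set.compl_subset_compl.2 Set.subset_union_left)) i hiAD)
    have hpos' : (0 : ℝ) < dInf i (A ∪ ↑D) := by exact_mod_cast hpos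
    have hle' : (dInf i (A ∪ ↑D) : ℝ) ≤ M := by exact_mod_cast hle
    apply div_le_div_of_nonneg_left hc₆.le (Real.sqrt_pos.2 hpos')
    apply Real.sqrt_le_sqrt
    linarith
  have hc : 0 < c₆ / Real.sqrt (2 * (M : ℝ) + 1) := div_pos hc₆ (Real.sqrt_pos.2 (by positivity))
  have hne : ∀ D : Finset Site, ∀ i ∈ B, i ∉ D → Zpart V (A ∪ ↑D) ≠ 0 := by
    intro D i hi hiD h0
    have := key D i hi hiD
    rw [h0, div_zero] at this
    linarith
  have hA0 : Zpart V A ≠ 0 := by simpa using hne ∅ b hb (by simp)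
  induction C using Finset.induction_on with
  | empty => simp [div_self hA0]
  | insert i D hiD ih =>
    have hi : i ∈ B := hC (Finset.mem_insert_self i D)
    have h1 := ih ((Finset.subset_insert i D).trans hC)
    have h2 := key D i hi hiD
    have hset : A ∪ (↑(insert i D) : Set Site) = A ∪ ↑D ∪ {i} := by
      ext x
      simp
    rw [hset, Finset.card_insert_of_notMem hiD, pow_succ]
    have hD := hne D i hi hiD
    calc _ ≤ Zpart V (A ∪ ↑D) / Zpart V A * (Zpart V (A ∪ ↑D ∪ {i}) / Zpart V (A ∪ ↑D)) :=
          mul_le_mul h1 h2 hc.le (le_trans (by positivity) h1)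
      _ = _ := by field_simp

end DeltaPinning
end

section
/- For every N ∈ ℕ and every finite nonempty B ⊆ Λ_N: Σ_{A ⊆ Λ_N : Ā ∈ 𝒟_B} ρ(A) ≤ ( inf over A ∈ 𝒟_B with finite complement of Σ_{C ⊆ B} e^{J|C|} Z(A ∪ C)/Z(A) )^{−1}. -/
open MeasureTheory Real
open Classical

namespace DeltaPinning

lemma V_lower (c_V : ℝ) (V : ℝ → ℝ)
    (hVsmooth : ContDiff ℝ (⊤ : ℕ∞) V) (hVeven : ∀ t, V (-t) = V t)
    (hVlb : ∀ t, 1 / c_V ≤ iteratedDeriv 2 V t) (t : ℝ) :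
    V 0 + (1 / c_V) / 2 * t ^ 2 ≤ V t := by
  set a := 1 / c_V with ha
  have hd : Differentiable ℝ V := hVsmooth.differentiable (by simp)
  have hd2 : Differentiable ℝ (deriv V) := by
    have h1 : ContDiff ℝ (1 + 1) V := by
      have := hVsmooth.of_le (m := 2) (WithTop.coe_le_coe.2 (le_top : (2 : ℕ∞) ≤ ⊤))
      simpa [one_add_one_eq_two] using this
    have := (contDiff_succ_iff_deriv.1 h1).2.2
    exact this.differentiable (by simp)
  have e1 : deriv (fun t : ℝ => V t - a / 2 * t ^ 2) = fun t => deriv V t - a * t := by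
    funext x
    have := (hd x).hasDerivAt.sub (((hasDerivAt_id x).pow 2).const_mul (a / 2))
    refine HasDerivAt.deriv ?_
    convert this using 1
    · funext y; simp
    · simp; ring
  have e2 : ∀ x, deriv (fun t : ℝ => deriv V t - a * t) x = deriv (deriv V) x - a := by
    intro x
    have := (hd2 x).hasDerivAt.sub ((hasDerivAt_id x).const_mul a)
    refine HasDerivAt.deriv ?_
    convert this using 1
    · funext y; simp
    · simp
  have hconv : ConvexOn ℝ Set.univ (fun t : ℝ => V t - a / 2 * t ^ 2) := by
    apply convexOn_univ_of_deriv2_nonneg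
    · fun_prop
    · rw [e1]; fun_prop
    · intro x
      have h := hVlb x
      rw [iteratedDeriv_succ, iteratedDeriv_one] at h
      simp only [Function.iterate_succ, Function.iterate_zero, Function.comp, id]
      rw [e1, e2]
      linarith
  have := hconv.2 (Set.mem_univ t) (Set.mem_univ (-t)) (by norm_num : (0:ℝ) ≤ 1/2)
    (by norm_num : (0:ℝ) ≤ 1/2) (by norm_num)
  simp only [smul_eq_mul, hVeven] at this
  have e0 : (1/2 : ℝ) * t + 1/2 * (-t) = 0 := by ring
  rw [e0] at this
  nlinarith

/-- The set of ordered pairs entering the Hamiltonian. -/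
def pairSet (A : Set Site) : Set (Site × Site) :=
  {p | adj p.1 p.2 ∧ (p.1 ∉ A ∨ p.2 ∉ A)}

lemma pairSet_finite {A : Set Site} (h : (Aᶜ : Set Site).Finite) : (pairSet A).Finite := by
  have hI : (Set.Icc ((-1, -1) : Site) (1, 1)).Finite := Set.finite_Icc _ _
  have h1 := (h.prod hI).image (fun q : Site × Site => (q.1, q.1 + q.2))
  have h2 := (h.prod hI).image (fun q : Site × Site => (q.1 + q.2, q.1))
  refine (h1.union h2).subset ?_
  rintro ⟨⟨a, b⟩, ⟨c, d⟩⟩ ⟨hadj, hor⟩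
  simp only [adj, dist1] at hadj hor
  rcases hor with hh | hh
  · left
    refine ⟨((a, b), (c - a, d - b)), ⟨hh, ?_⟩, by simp⟩
    simp only [Set.mem_Icc, Prod.mk_le_mk]
    omega
  · right
    refine ⟨((c, d), (a - c, b - d)), ⟨hh, ?_⟩, by simp⟩
    simp only [Set.mem_Icc, Prod.mk_le_mk]
    omega

lemma ham_eq (V : ℝ → ℝ) {A : Set Site} (h : (Aᶜ : Set Site).Finite) (φ : Site → ℝ) :
    ham V A φ = (1 / 2) * ∑ p ∈ (pairSet_finite h).toFinset, V (φ p.1 - φ p.2) := by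
  unfold ham
  congr 1
  rw [finsum_eq_sum_of_support_subset (s := (pairSet_finite h).toFinset)]
  · apply Finset.sum_congr rfl
    intro p hp
    have : p ∈ pairSet A := by simpa using hp
    exact if_pos this
  · intro p hp
    by_contra hc
    apply hp
    have : ¬ p ∈ pairSet A := by simpa using hc
    exact if_neg this

lemma extZ_zero {A : Set Site} (η : ↥(Aᶜ) → ℝ) {i : Site} (hi : i ∈ A) : extZ A η i = 0 := by
  simp [extZ, hi]

lemma poincare {A : Set Site} (h : (Aᶜ : Set Site).Finite) :
    ∃ M : ℕ, ∀ (φ : Site → ℝ), (∀ i ∈ A, φ i = 0) → ∀ i ∈ Aᶜ,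
      φ i ^ 2 ≤ (M : ℝ) ^ 2 * ∑ p ∈ (pairSet_finite h).toFinset, (φ p.1 - φ p.2) ^ 2 := by
  obtain ⟨K, hK⟩ := (h.image (fun i : Site => i.1.natAbs)).bddAbove
  refine ⟨2 * K + 1, fun φ hφ i hi => ?_⟩
  set Q := ∑ p ∈ (pairSet_finite h).toFinset, (φ p.1 - φ p.2) ^ 2 with hQ
  have hQ0 : 0 ≤ Q := Finset.sum_nonneg fun _ _ => sq_nonneg _
  have step : ∀ j : Site, |φ j - φ (j + (1, 0))| ≤ √Q := by
    intro j
    apply Real.abs_le_sqrt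
    by_cases hj : (j, j + (1, 0)) ∈ pairSet A
    · exact Finset.single_le_sum (f := fun p : Site × Site => (φ p.1 - φ p.2) ^ 2)
        (fun _ _ => sq_nonneg _) ((pairSet_finite h).mem_toFinset.2 hj)
    · have hadj : adj j (j + (1, 0)) := by simp [adj, dist1]
      have : j ∈ A ∧ j + (1, 0) ∈ A := by
        by_contra hc
        exact hj ⟨hadj, by tauto⟩
      rw [hφ _ this.1, hφ _ this.2]
      simpa using hQ0
  have walk : ∀ k : ℕ, |φ i - φ (i + ((k : ℤ), 0))| ≤ k * √Q := by
    intro k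
    induction k with
    | zero =>
      have : i + (((0 : ℕ) : ℤ), (0 : ℤ)) = i := by ext <;> simp
      rw [this]; simp
    | succ k ih =>
      have e : i + (((k + 1 : ℕ) : ℤ), (0 : ℤ)) = (i + ((k : ℤ), 0)) + (1, 0) := by
        ext <;> simp; ring
      have := step (i + ((k : ℤ), 0))
      rw [← e] at this
      have tri := abs_sub_le (φ i) (φ (i + ((k : ℤ), 0))) (φ (i + (((k + 1 : ℕ) : ℤ), 0)))
      push_cast at *
      linarith
  have hend : i + (((2 * K + 1 : ℕ) : ℤ), (0 : ℤ)) ∈ A := by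
    by_contra hc
    have h1 : i.1.natAbs ≤ K := hK ⟨i, hi, rfl⟩
    have h2 : (i + (((2 * K + 1 : ℕ) : ℤ), (0 : ℤ))).1.natAbs ≤ K := hK ⟨_, hc, rfl⟩
    simp only [Prod.fst_add] at h2
    omega
  have := walk (2 * K + 1)
  rw [hφ _ hend, sub_zero] at this
  have h3 := pow_le_pow_left₀ (abs_nonneg _) this 2
  rwa [sq_abs, mul_pow, Real.sq_sqrt hQ0] at h3

lemma Zpart_pos (c_V : ℝ) (hcV : 1 ≤ c_V) (V : ℝ → ℝ)
    (hVsmooth : ContDiff ℝ (⊤ : ℕ∞) V) (hVeven : ∀ t, V (-t) = V t)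
    (hVlb : ∀ t, 1 / c_V ≤ iteratedDeriv 2 V t)
    {A : Set Site} (h : (Aᶜ : Set Site).Finite) : 0 < Zpart V A := by
  unfold Zpart
  rw [dif_pos h]
  letI := h.fintype
  have hVc : Continuous V := hVsmooth.continuous
  apply integral_exp_pos
  set P := (pairSet_finite h).toFinset with hP
  obtain ⟨M, hM⟩ := poincare h
  have hc0 : 0 < c_V := by linarith
  set n : ℝ := (Fintype.card ↥(Aᶜ) : ℝ) with hn
  set R : ℝ := n * (M : ℝ) ^ 2 + 1 with hR
  have hR0 : 0 < R := by positivity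
  set b : ℝ := 1 / c_V / 4 / R with hb
  have hb0 : 0 < b := by positivity
  have hint : Integrable (fun η : ↥(Aᶜ) → ℝ => ∏ i, Real.exp (-b * η i ^ 2)) :=
    Integrable.fintype_prod (f := fun _ x => Real.exp (-b * x ^ 2))
      (fun _ => integrable_exp_neg_mul_sq hb0)
  refine (hint.const_mul (Real.exp (-(1 / 2 * (P.card * V 0))))).mono' ?_ ?_
  · apply Continuous.aestronglyMeasurable
    simp only [ham_eq V h]
    have hx : ∀ i : Site, Continuous fun η : ↥(Aᶜ) → ℝ => extZ A η i := by
      intro i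
      by_cases hi : i ∈ Aᶜ
      · simp only [extZ, dif_pos hi]; fun_prop
      · simp only [extZ, dif_neg hi]; fun_prop
    fun_prop
  · refine Filter.Eventually.of_forall fun η => ?_
    rw [Real.norm_eq_abs, abs_of_pos (Real.exp_pos _), ← Real.exp_sum, ← Real.exp_add,
      Real.exp_le_exp, ham_eq V h, ← hP, ← Finset.mul_sum]
    set Q := ∑ p ∈ P, (extZ A η p.1 - extZ A η p.2) ^ 2 with hQ
    have hQ0 : 0 ≤ Q := Finset.sum_nonneg fun _ _ => sq_nonneg _
    have h1 : P.card * V 0 + 1 / c_V / 2 * Q ≤ ∑ p ∈ P, V (extZ A η p.1 - extZ A η p.2) := by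
      rw [hQ, Finset.mul_sum, ← nsmul_eq_mul, ← Finset.sum_const, ← Finset.sum_add_distrib]
      exact Finset.sum_le_sum fun p _ => V_lower c_V V hVsmooth hVeven hVlb _
    have h2 : ∑ i, η i ^ 2 ≤ R * Q := by
      have : ∑ i, η i ^ 2 ≤ ∑ _i : ↥(Aᶜ), (M : ℝ) ^ 2 * Q := by
        refine Finset.sum_le_sum fun i _ => ?_
        have := hM (extZ A η) (fun j hj => extZ_zero η hj) i i.2
        have e : extZ A η i = η i := by
          have hi : (i : Site) ∈ Aᶜ := i.2
          simp only [extZ, dif_pos hi]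
        rwa [e] at this
      rw [Finset.sum_const, nsmul_eq_mul, Finset.card_univ, ← hn] at this
      rw [hR]; nlinarith
    have h3 : b * ∑ i, η i ^ 2 ≤ 1 / c_V / 4 * Q := by
      calc b * ∑ i, η i ^ 2 ≤ b * (R * Q) := by gcongr
        _ = 1 / c_V / 4 * Q := by rw [hb]; field_simp
    linarith

lemma bar_compl_finite (N : ℕ) (A : Finset Site) : ((bar N A)ᶜ : Set Site).Finite := by
  refine (Lam N).finite_toSet.subset ?_
  intro x hx
  by_contra hc
  exact hx (Or.inr hc)

lemma union_inj {A A' C C' B : Finset Site} (d1 : Disjoint A B) (d2 : Disjoint A' B)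
    (h1 : C ⊆ B) (h2 : C' ⊆ B) (h : A ∪ C = A' ∪ C') : (A, C) = (A', C') := by
  have e1 : ∀ {A C : Finset Site}, Disjoint A B → C ⊆ B → (A ∪ C) \ B = A := by
    intro A C d h
    rw [Finset.union_sdiff_distrib, Finset.sdiff_eq_self_of_disjoint d,
      Finset.sdiff_eq_empty_iff_subset.2 h, Finset.union_empty]
  have e2 : ∀ {A C : Finset Site}, Disjoint A B → C ⊆ B → (A ∪ C) ∩ B = C := by
    intro A C d h
    rw [Finset.union_inter_distrib_right, Finset.disjoint_iff_inter_eq_empty.1 d,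
      Finset.inter_eq_left.2 h, Finset.empty_union]
  refine Prod.ext ?_ ?_
  · exact (e1 d1 h1).symm.trans (by rw [h]; exact e1 d2 h2)
  · exact (e2 d1 h1).symm.trans (by rw [h]; exact e2 d2 h2)

/-- the total pinning weight of dry neighbours of `B` is bounded by the
inverse of `inf_{A ∈ 𝒟_B} Σ_{C ⊆ B} e^{J|C|} Z(A∪C)/Z(A)`. -/
theorem statement10
    (c_V : ℝ) (hcV : 1 ≤ c_V) (V : ℝ → ℝ)
    (hVsmooth : ContDiff ℝ (⊤ : ℕ∞) V) (hVeven : ∀ t, V (-t) = V t)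
    (hVlb : ∀ t, 1 / c_V ≤ iteratedDeriv 2 V t)
    (hVub : ∀ t, iteratedDeriv 2 V t ≤ c_V)
    (J : ℝ) (N : ℕ) (B : Finset Site) (hB : B.Nonempty) :
    (∑ A ∈ (Lam N).powerset, if dryNbr (↑B) (bar N A) then rho V J N A else 0)
      ≤ (dryInf V J B)⁻¹ := by
  have hZ : ∀ A : Set Site, (Aᶜ : Set Site).Finite → 0 < Zpart V A := fun A h =>
    Zpart_pos c_V hcV V hVsmooth hVeven hVlb h
  have hZ0 : ∀ A : Set Site, 0 ≤ Zpart V A := by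
    intro A
    by_cases h : (Aᶜ : Set Site).Finite
    · exact (hZ A h).le
    · simp [Zpart, h]
  have hw : ∀ A, 0 < wt V J N A := fun A =>
    mul_pos (Real.exp_pos _) (hZ _ (bar_compl_finite N A))
  have hdry1 : ∀ A : Set Site, (Aᶜ : Set Site).Finite → 1 ≤ drySum V J B A := by
    intro A h
    have := Finset.single_le_sum
      (f := fun C : Finset Site => Real.exp (J * C.card) * (Zpart V (A ∪ ↑C) / Zpart V A))
      (s := B.powerset) (fun C _ => mul_nonneg (Real.exp_pos _).le (div_nonneg (hZ0 _) (hZ0 _)))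
      (Finset.empty_mem_powerset B)
    simpa [drySum, (hZ A h).ne'] using this
  set T := ∑ D ∈ (Lam N).powerset, wt V J N D with hT
  have hT0 : 0 < T := Finset.sum_pos (fun D _ => hw D) ⟨∅, by simp⟩
  set S := drySum V J B '' {A : Set Site | dryNbr ↑B A ∧ (Aᶜ : Set Site).Finite} with hS
  have hS1 : ∀ x ∈ S, 1 ≤ x := by
    rintro x ⟨A, ⟨_, hA⟩, rfl⟩
    exact hdry1 A hA
  rw [← Finset.sum_filter]
  set F := (Lam N).powerset.filter (fun A => dryNbr (↑B) (bar N A)) with hF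
  rcases F.eq_empty_or_nonempty with hE | ⟨A0, hA0⟩
  · rw [hE, Finset.sum_empty]
    exact inv_nonneg.2 (Real.sInf_nonneg fun x hx => zero_le_one.trans (hS1 x hx))
  have hmemS : ∀ A ∈ F, drySum V J B (bar N A) ∈ S := fun A hA =>
    ⟨_, ⟨(Finset.mem_filter.1 hA).2, bar_compl_finite N A⟩, rfl⟩
  have hI1 : 1 ≤ dryInf V J B := le_csInf ⟨_, hmemS _ hA0⟩ hS1
  have hle : ∀ A ∈ F, dryInf V J B ≤ drySum V J B (bar N A) := fun A hA =>
    csInf_le ⟨1, hS1⟩ (hmemS A hA)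
  have hdisj : ∀ A ∈ F, Disjoint A B := by
    intro A hA
    rw [Finset.disjoint_left]
    intro x hx hxB
    have : x ∈ bar N A ∩ (↑B : Set Site) := ⟨Or.inl hx, hxB⟩
    rw [(Finset.mem_filter.1 hA).2.1] at this
    exact this
  have hBL : B ⊆ Lam N := by
    intro x hxB
    by_contra hc
    have : x ∈ bar N A0 ∩ (↑B : Set Site) := ⟨Or.inr (by simpa using hc), hxB⟩
    rw [(Finset.mem_filter.1 hA0).2.1] at this
    exact this
  have hterm : ∀ A ∈ F, wt V J N A * drySum V J B (bar N A)
      = ∑ C ∈ B.powerset, wt V J N (A ∪ C) := by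
    intro A hA
    rw [drySum, Finset.mul_sum]
    refine Finset.sum_congr rfl fun C hC => ?_
    have hd : Disjoint A C := (hdisj A hA).mono_right (Finset.mem_powerset.1 hC)
    have hbar : bar N (A ∪ C) = bar N A ∪ ↑C := by
      simp only [bar, Finset.coe_union]
      exact Set.union_right_comm _ _ _
    have hz := (hZ _ (bar_compl_finite N A)).ne'
    rw [wt, wt, hbar, Finset.card_union_of_disjoint hd]
    push_cast
    rw [mul_add, Real.exp_add]
    field_simp
  have hmain : (∑ A ∈ F, wt V J N A) * dryInf V J B ≤ T := by
    calc (∑ A ∈ F, wt V J N A) * dryInf V J B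
        ≤ ∑ A ∈ F, ∑ C ∈ B.powerset, wt V J N (A ∪ C) := by
          rw [Finset.sum_mul]
          refine Finset.sum_le_sum fun A hA => ?_
          rw [← hterm A hA]
          exact mul_le_mul_of_nonneg_left (hle A hA) (hw A).le
      _ = ∑ q ∈ F ×ˢ B.powerset, wt V J N (q.1 ∪ q.2) := by rw [Finset.sum_product]
      _ = ∑ D ∈ (F ×ˢ B.powerset).image (fun q => q.1 ∪ q.2), wt V J N D := by
          rw [Finset.sum_image]
          rintro ⟨A, C⟩ hq ⟨A', C'⟩ hq' heq
          simp only [Finset.coe_product, Set.mem_prod, Finset.mem_coe,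
            Finset.mem_powerset] at hq hq' heq
          exact union_inj (hdisj A hq.1) (hdisj A' hq'.1) hq.2 hq'.2 heq
      _ ≤ T := by
          refine Finset.sum_le_sum_of_subset_of_nonneg ?_ fun D _ _ => (hw D).le
          intro D hD
          obtain ⟨⟨A, C⟩, hq, rfl⟩ := Finset.mem_image.1 hD
          rw [Finset.mem_product, Finset.mem_powerset] at hq
          rw [Finset.mem_powerset]
          exact Finset.union_subset (Finset.mem_powerset.1 (Finset.mem_filter.1 hq.1).1)
            (hq.2.trans hBL)
  simp only [rho, ← hT]
  rw [← Finset.sum_div, inv_eq_one_div, div_le_div_iff₀ hT0 (by linarith), one_mul]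
  exact hmain

end DeltaPinning
end

section
/- Let A ⊆ ℤ² have finite complement, with 0 ∉ A. Let ℙ_A be the Gibbs measure for the potential V, and let ℙ_A^G be the Gaussian Gibbs measure defined in the same way but with V(t) replaced by the quadratic potential c_V t²/2. Then the variance of φ_0 dominates the Gaussian one: Var_{ℙ_A}(φ_0) ≥ Var_{ℙ_A^G}(φ_0). -/
open MeasureTheory Real
open Classical

namespace DeltaPinning

/-! ### Auxiliary lemmas -/

/-- Second difference bound coming from an upper bound on the second derivative. -/
lemma aux_second_diff (c : ℝ) (V : ℝ → ℝ) (hV : ContDiff ℝ (⊤ : ℕ∞) V)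
    (hub : ∀ t, iteratedDeriv 2 V t ≤ c) (t s : ℝ) :
    V (t + s) + V (t - s) - 2 * V t ≤ c * s ^ 2 := by
  have hd : Differentiable ℝ V := hV.differentiable (by simp)
  have hd' : Differentiable ℝ (deriv V) := by
    have := hV.differentiable_iteratedDeriv 1 (by exact_mod_cast WithTop.coe_lt_top 1)
    rwa [iteratedDeriv_one] at this
  have h1 : deriv (fun x => c * x ^ 2 / 2 - V x) = fun x => c * x - deriv V x := by
    funext x
    have e1 : HasDerivAt (fun x : ℝ => c * x ^ 2 / 2) (c * x) x := by
      have h := ((hasDerivAt_pow 2 x).const_mul c).div_const 2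
      have e : c * (((2 : ℕ) : ℝ) * x ^ (2 - 1)) / 2 = c * x := by norm_num; ring
      rw [e] at h
      exact h
    exact (e1.sub (hd x).hasDerivAt).deriv
  have hconv : ConvexOn ℝ Set.univ (fun x => c * x ^ 2 / 2 - V x) := by
    apply convexOn_univ_of_deriv2_nonneg
    · fun_prop
    · rw [h1]; fun_prop
    · intro x
      rw [Function.iterate_succ, Function.comp, h1, Function.iterate_one]
      have e1 : HasDerivAt (fun x : ℝ => c * x) c x := by
        simpa using (hasDerivAt_id x).const_mul c
      have := (e1.sub (hd' x).hasDerivAt).deriv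
      have h2 := hub x
      rw [iteratedDeriv_succ, iteratedDeriv_one] at h2
      change 0 ≤ deriv ((fun x : ℝ => c * x) - deriv V) x
      rw [this]; linarith
  have := hconv.2 (Set.mem_univ (t + s)) (Set.mem_univ (t - s))
    (show (0 : ℝ) ≤ 1 / 2 by norm_num) (show (0 : ℝ) ≤ 1 / 2 by norm_num) (by norm_num)
  simp only [smul_eq_mul] at this
  have e : 1 / 2 * (t + s) + 1 / 2 * (t - s) = t := by ring
  rw [e] at this
  nlinarith

/-- Quadratic lower bound for an even uniformly convex potential. -/
lemma aux_lower (c : ℝ) (V : ℝ → ℝ) (hV : ContDiff ℝ (⊤ : ℕ∞) V) (heven : ∀ t, V (-t) = V t)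
    (hlb : ∀ t, c ≤ iteratedDeriv 2 V t) (s : ℝ) :
    V 0 + c * s ^ 2 / 2 ≤ V s := by
  have h := aux_second_diff (-c) (fun x => - V x) hV.neg (fun t => by
    have : iteratedDeriv 2 (fun x => - V x) t = - iteratedDeriv 2 V t := by
      exact iteratedDeriv_fun_neg 2 V t
    rw [this]; linarith [hlb t]) 0 s
  simp only [zero_add, zero_sub, heven] at h
  linarith

/-- Cramér–Rao type lower bound, by translations. -/
lemma aux_key_lower {ι : Type*} [Fintype ι] (H : (ι → ℝ) → ℝ) (i : ι) (v : ι → ℝ)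
    (h0 : Integrable (fun x : ι → ℝ => Real.exp (- H x)))
    (h1 : Integrable (fun x : ι → ℝ => x i * Real.exp (- H x)))
    (h2 : Integrable (fun x : ι → ℝ => x i ^ 2 * Real.exp (- H x)))
    (hmean : ∫ x : ι → ℝ, x i * Real.exp (- H x) = 0)
    (hH : ∀ (h : ℝ) (x : ι → ℝ), H (x + h • v) + H (x + (-h) • v) - 2 * H x ≤ h ^ 2 * v i) :
    v i * ∫ x : ι → ℝ, Real.exp (- H x) ≤ ∫ x : ι → ℝ, x i ^ 2 * Real.exp (- H x) := by
  set w : (ι → ℝ) → ℝ := fun x => Real.exp (- H x) with hw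
  set Z := ∫ x : ι → ℝ, w x with hZ
  set M := ∫ x : ι → ℝ, x i ^ 2 * w x with hM
  -- translates
  have T0 : ∀ h : ℝ, Integrable (fun x => w (x + h • v)) ∧ ∫ x, w (x + h • v) = Z := fun h =>
    ⟨h0.comp_add_right _, integral_add_right_eq_self w _⟩
  have T1 : ∀ h : ℝ, Integrable (fun x => x i * w (x + h • v)) ∧
      ∫ x, x i * w (x + h • v) = - (h * v i) * Z := by
    intro h
    have hi : Integrable (fun x : ι → ℝ => x i * w x - (h * v i) * w x) := h1.sub (h0.const_mul _)
    have e : (fun x => x i * w (x + h • v)) =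
        fun x => (fun x : ι → ℝ => x i * w x - (h * v i) * w x) (x + h • v) := by
      funext x; simp only [Pi.add_apply, Pi.smul_apply, smul_eq_mul]; ring
    rw [e]
    refine ⟨hi.comp_add_right _, ?_⟩
    rw [integral_add_right_eq_self (fun x : ι → ℝ => x i * w x - (h * v i) * w x),
      integral_sub h1 (h0.const_mul _), integral_const_mul, hmean]
    ring
  have T2 : ∀ h : ℝ, Integrable (fun x => x i ^ 2 * w (x + h • v)) ∧
      ∫ x, x i ^ 2 * w (x + h • v) = M + (h * v i) ^ 2 * Z := by
    intro h
    have hi1 : Integrable (fun x : ι → ℝ => x i ^ 2 * w x - (2 * (h * v i)) * (x i * w x)) :=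
      h2.sub (h1.const_mul _)
    have hi : Integrable (fun x : ι → ℝ => x i ^ 2 * w x - (2 * (h * v i)) * (x i * w x)
      + (h * v i) ^ 2 * w x) := hi1.add (h0.const_mul _)
    have e : (fun x => x i ^ 2 * w (x + h • v)) =
        fun x => (fun x : ι → ℝ => x i ^ 2 * w x - (2 * (h * v i)) * (x i * w x)
          + (h * v i) ^ 2 * w x) (x + h • v) := by
      funext x; simp only [Pi.add_apply, Pi.smul_apply, smul_eq_mul]; ring
    rw [e]
    refine ⟨hi.comp_add_right _, ?_⟩
    rw [integral_add_right_eq_self (fun x : ι → ℝ => x i ^ 2 * w x - (2 * (h * v i)) * (x i * w x)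
          + (h * v i) ^ 2 * w x), integral_add hi1 (h0.const_mul _),
      integral_sub h2 (h1.const_mul _), integral_const_mul, integral_const_mul, hmean]
    ring
  have step : ∀ h : ℝ, 0 < h → v i * Z ≤ M + h ^ 2 * (v i ^ 2 * Z) := by
    intro h hh
    have pt : ∀ x : ι → ℝ, h * (x i * w (x + (-h) • v) - x i * w (x + h • v)) ≤
        (w (x + h • v) + w (x + (-h) • v) - (2 * (1 - h ^ 2 * v i / 2)) * w x)
          + (h ^ 2 / 2) * (x i ^ 2 * w (x + h • v) + x i ^ 2 * w (x + (-h) • v)) := by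
      intro x
      set a := Real.exp (- H (x + h • v) / 2) with ha
      set b := Real.exp (- H (x + (-h) • v) / 2) with hb
      have ea : w (x + h • v) = a ^ 2 := by
        simp only [hw, ha]; rw [← Real.exp_nat_mul]; congr 1; push_cast; ring
      have eb : w (x + (-h) • v) = b ^ 2 := by
        simp only [hw, hb]; rw [← Real.exp_nat_mul]; congr 1; push_cast; ring
      have eab : (1 - h ^ 2 * v i / 2) * w x ≤ a * b := by
        have : a * b = Real.exp (- (H (x + h • v) + H (x + (-h) • v)) / 2) := by
          rw [ha, hb, ← Real.exp_add]; congr 1; ring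
        rw [this]
        have h3 : Real.exp (- (h ^ 2 * v i / 2)) * w x ≤
            Real.exp (- (H (x + h • v) + H (x + (-h) • v)) / 2) := by
          simp only [hw]; rw [← Real.exp_add]; apply Real.exp_le_exp.2
          linarith [hH h x]
        have h4 : 1 - h ^ 2 * v i / 2 ≤ Real.exp (- (h ^ 2 * v i / 2)) := by
          linarith [Real.add_one_le_exp (- (h ^ 2 * v i / 2))]
        exact (mul_le_mul_of_nonneg_right h4 (Real.exp_pos _).le).trans h3
      rw [ea, eb]
      nlinarith [sq_nonneg ((a - b) + h * x i / 2 * (a + b)), mul_nonneg (sq_nonneg (h * x i)) (sq_nonneg (a - b))]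
    have hL : Integrable (fun x : ι → ℝ => h * (x i * w (x + (-h) • v) - x i * w (x + h • v))) :=
      ((T1 (-h)).1.sub (T1 h).1).const_mul _
    have hA : Integrable (fun x : ι → ℝ => w (x + h • v) + w (x + (-h) • v)) :=
      (T0 h).1.add (T0 (-h)).1
    have hB : Integrable (fun x : ι → ℝ => (w (x + h • v) + w (x + (-h) • v)
        - (2 * (1 - h ^ 2 * v i / 2)) * w x)) := hA.sub (h0.const_mul _)
    have hC : Integrable (fun x : ι → ℝ => (h ^ 2 / 2) *
        (x i ^ 2 * w (x + h • v) + x i ^ 2 * w (x + (-h) • v))) :=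
      ((T2 h).1.add (T2 (-h)).1).const_mul _
    have := integral_mono hL (hB.add hC) pt
    simp only [Pi.add_apply] at this
    rw [integral_const_mul, integral_sub (T1 (-h)).1 (T1 h).1, integral_add hB hC,
      integral_sub hA (h0.const_mul _), integral_add (T0 h).1 (T0 (-h)).1, integral_const_mul,
      integral_const_mul, integral_add (T2 h).1 (T2 (-h)).1, (T0 h).2, (T0 (-h)).2,
      (T1 h).2, (T1 (-h)).2, (T2 h).2, (T2 (-h)).2] at this
    have h5 : h ^ 2 * (v i * Z) ≤ h ^ 2 * (M + h ^ 2 * (v i ^ 2 * Z)) := by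
      have e : ∫ x, w x = Z := rfl
      rw [e] at this
      nlinarith
    exact le_of_mul_le_mul_left h5 (by positivity)
  have lim : Filter.Tendsto (fun h : ℝ => M + h ^ 2 * (v i ^ 2 * Z))
      (nhdsWithin 0 (Set.Ioi 0)) (nhds M) := by
    have : Continuous (fun h : ℝ => M + h ^ 2 * (v i ^ 2 * Z)) := by fun_prop
    have := (this.tendsto 0).mono_left (nhdsWithin_le_nhds (s := Set.Ioi 0))
    simpa using this
  exact ge_of_tendsto lim (by filter_upwards [self_mem_nhdsWithin] with h hh using step h hh)

lemma aux_cosh (y : ℝ) : 2 + y ^ 2 ≤ Real.exp y + Real.exp (-y) := by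
  have h1 : Real.cosh y = 1 + 2 * Real.sinh (y / 2) ^ 2 := by
    have := Real.cosh_two_mul (y / 2)
    have h3 := Real.cosh_sq (y / 2)
    rw [show 2 * (y / 2) = y by ring] at this
    linarith
  have h2 : (y / 2) ^ 2 ≤ Real.sinh (y / 2) ^ 2 := by
    rw [sq_le_sq, Real.abs_sinh]
    exact Real.self_le_sinh_iff.2 (abs_nonneg _)
  rw [Real.cosh_eq] at h1
  linarith

/-- Upper bound on the second moment of a Gaussian. -/
lemma aux_gauss_upper {ι : Type*} [Fintype ι] (Q : (ι → ℝ) → ℝ) (i : ι) (v : ι → ℝ)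
    (h0 : Integrable (fun x : ι → ℝ => Real.exp (- Q x)))
    (h2 : Integrable (fun x : ι → ℝ => x i ^ 2 * Real.exp (- Q x)))
    (hQ : ∀ (h : ℝ) (x : ι → ℝ), Q (x + h • v) = Q x + h * x i + h ^ 2 / 2 * v i) :
    ∫ x : ι → ℝ, x i ^ 2 * Real.exp (- Q x) ≤ v i * ∫ x : ι → ℝ, Real.exp (- Q x) := by
  set w : (ι → ℝ) → ℝ := fun x => Real.exp (- Q x) with hw
  set Z := ∫ x : ι → ℝ, w x with hZ
  set M := ∫ x : ι → ℝ, x i ^ 2 * w x with hM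
  have Zn : 0 ≤ Z := integral_nonneg fun x => (Real.exp_pos _).le
  have T0 : ∀ h : ℝ, Integrable (fun x => w (x + h • v)) ∧ ∫ x, w (x + h • v) = Z := fun h =>
    ⟨h0.comp_add_right _, integral_add_right_eq_self w _⟩
  have step : ∀ h : ℝ, h ^ 2 * M ≤ 2 * (Real.exp (h ^ 2 * v i / 2) - 1) * Z := by
    intro h
    have pt : ∀ x : ι → ℝ, 2 * w x + h ^ 2 * (x i ^ 2 * w x) ≤
        Real.exp (h ^ 2 * v i / 2) * (w (x + h • v) + w (x + (-h) • v)) := by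
      intro x
      have e1 : ∀ k : ℝ, k ^ 2 = h ^ 2 → Real.exp (h ^ 2 * v i / 2) * w (x + k • v) =
          Real.exp (- (k * x i)) * w x := by
        intro k hk
        simp only [hw]; rw [← Real.exp_add, ← Real.exp_add, hQ, hk]; congr 1; ring
      rw [mul_add, e1 h rfl, e1 (-h) (by ring)]
      have := mul_le_mul_of_nonneg_right (aux_cosh (h * x i)) (Real.exp_pos (- Q x)).le
      simp only [neg_mul, neg_neg]
      simp only [hw]
      nlinarith
    have := integral_mono ((h0.const_mul 2).add (h2.const_mul (h ^ 2)))
      (((T0 h).1.add (T0 (-h)).1).const_mul _) pt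
    simp only [Pi.add_apply] at this
    rw [integral_add (h0.const_mul 2) (h2.const_mul (h ^ 2)), integral_const_mul,
      integral_const_mul, integral_const_mul, integral_add (T0 h).1 (T0 (-h)).1,
      (T0 h).2, (T0 (-h)).2] at this
    have e : ∫ x, w x = Z := rfl
    have e' : ∫ x, x i ^ 2 * w x = M := rfl
    rw [e, e'] at this
    linarith
  have lim : Filter.Tendsto (fun h : ℝ => v i * Z + h ^ 2 * (v i ^ 2 / 2 * Z))
      (nhdsWithin 0 (Set.Ioi 0)) (nhds (v i * Z)) := by
    have : Continuous (fun h : ℝ => v i * Z + h ^ 2 * (v i ^ 2 / 2 * Z)) := by fun_prop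
    have := (this.tendsto 0).mono_left (nhdsWithin_le_nhds (s := Set.Ioi 0))
    simpa using this
  have small : ∀ᶠ h : ℝ in nhdsWithin 0 (Set.Ioi 0), |h ^ 2 * v i / 2| < 1 := by
    have : Continuous (fun h : ℝ => |h ^ 2 * v i / 2|) := by fun_prop
    have := (this.tendsto 0).mono_left (nhdsWithin_le_nhds (s := Set.Ioi 0))
    exact this.eventually_lt_const (by simp)
  refine ge_of_tendsto lim ?_
  filter_upwards [self_mem_nhdsWithin, small] with h hh hs
  have hh' : (0 : ℝ) < h := hh
  have h3 := le_of_abs_le (Real.abs_exp_sub_one_sub_id_le hs.le)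
  have h4 : 2 * (Real.exp (h ^ 2 * v i / 2) - 1) * Z ≤
      2 * (h ^ 2 * v i / 2 + (h ^ 2 * v i / 2) ^ 2) * Z := by
    apply mul_le_mul_of_nonneg_right _ Zn
    linarith
  have h5 : h ^ 2 * M ≤ h ^ 2 * (v i * Z + h ^ 2 * (v i ^ 2 / 2 * Z)) := by
    have := step h
    nlinarith
  exact le_of_mul_le_mul_left h5 (by positivity)

/-- Integrability from quadratic growth. -/
lemma aux_integrable {ι : Type*} [Fintype ι] (H : (ι → ℝ) → ℝ) (i : ι) (hc : Continuous H)
    (K ε : ℝ) (hε : 0 < ε) (hb : ∀ x, K + ε * ∑ j, x j ^ 2 ≤ H x)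
    (g : (ι → ℝ) → ℝ) (hg : Continuous g) (hgb : ∀ x, |g x| ≤ 1 + x i ^ 2) :
    Integrable (fun x : ι → ℝ => g x * Real.exp (- H x)) := by
  have hG : Integrable (fun x : ι → ℝ => ∏ j, Real.exp (- (ε / 2) * x j ^ 2)) :=
    Integrable.fintype_prod (f := fun (_ : ι) (t : ℝ) => Real.exp (- (ε / 2) * t ^ 2))
      (fun _ => integrable_exp_neg_mul_sq (by positivity))
  refine (hG.const_mul ((1 + 2 / ε) * Real.exp (-K))).mono'
    (by fun_prop) (Filter.Eventually.of_forall fun x => ?_)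
  rw [Real.norm_eq_abs, abs_mul, abs_of_pos (Real.exp_pos _), ← Real.exp_sum, ← Finset.mul_sum]
  have hle : x i ^ 2 ≤ ∑ j, x j ^ 2 :=
    Finset.single_le_sum (f := fun j => x j ^ 2) (fun j _ => sq_nonneg _) (Finset.mem_univ i)
  set S := ∑ j, x j ^ 2 with hS
  have hS0 : 0 ≤ S := (sq_nonneg _).trans hle
  have h1 : 1 + S ≤ (1 + 2 / ε) * Real.exp (ε / 2 * S) := by
    have h2 := Real.add_one_le_exp (ε / 2 * S)
    have h3 : (1 + 2 / ε) * (ε / 2 * S + 1) = 1 + S + (ε / 2 * S + 2 / ε) := by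
      field_simp; ring
    have h4 : 0 ≤ ε / 2 * S + 2 / ε := by positivity
    have h5 : (1 + 2 / ε) * (ε / 2 * S + 1) ≤ (1 + 2 / ε) * Real.exp (ε / 2 * S) :=
      mul_le_mul_of_nonneg_left h2 (by positivity)
    linarith
  have h2 : Real.exp (- H x) ≤ Real.exp (-K) * Real.exp (- (ε * S)) := by
    rw [← Real.exp_add]; apply Real.exp_le_exp.2; linarith [hb x]
  calc |g x| * Real.exp (- H x)
      ≤ ((1 + 2 / ε) * Real.exp (ε / 2 * S)) * (Real.exp (-K) * Real.exp (- (ε * S))) := by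
        apply mul_le_mul _ h2 (Real.exp_pos _).le (by positivity)
        linarith [hgb x]
    _ = (1 + 2 / ε) * Real.exp (-K) * Real.exp (- (ε / 2) * S) := by
        have : Real.exp (- (ε / 2) * S) = Real.exp (ε / 2 * S) * Real.exp (- (ε * S)) := by
          rw [← Real.exp_add]; congr 1; ring
        rw [this]; ring

/-- The abstract comparison. -/
lemma aux_abstract {ι κ : Type*} [Fintype ι] (P : Finset κ) (l : κ → (ι → ℝ) →ₗ[ℝ] ℝ)
    (δ : ℝ) (hδ : 0 < δ) (hco : ∀ x : ι → ℝ, δ * ∑ j, x j ^ 2 ≤ ∑ p ∈ P, (l p x) ^ 2)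
    (c : ℝ) (hcV : 1 ≤ c) (V : ℝ → ℝ)
    (hV : ContDiff ℝ (⊤ : ℕ∞) V) (heven : ∀ t, V (-t) = V t)
    (hlb : ∀ t, 1 / c ≤ iteratedDeriv 2 V t) (hub : ∀ t, iteratedDeriv 2 V t ≤ c) (i : ι)
    (H Q : (ι → ℝ) → ℝ) (hH : ∀ x, H x = 1 / 2 * ∑ p ∈ P, V (l p x))
    (hQ : ∀ x, Q x = 1 / 2 * ∑ p ∈ P, c * (l p x) ^ 2 / 2) :
    (∫ x : ι → ℝ, x i * Real.exp (- H x)) = 0 ∧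
    (∫ x : ι → ℝ, x i ^ 2 * Real.exp (- Q x)) / (∫ x : ι → ℝ, Real.exp (- Q x)) ≤
      (∫ x : ι → ℝ, x i ^ 2 * Real.exp (- H x)) / (∫ x : ι → ℝ, Real.exp (- H x)) := by
  have hc0 : 0 < c := by linarith
  have hlc : ∀ p, Continuous (l p) := fun p => LinearMap.continuous_of_finiteDimensional _
  have hVc : Continuous V := hV.continuous
  have Hc : Continuous H := by
    rw [show H = fun x => 1 / 2 * ∑ p ∈ P, V (l p x) from funext hH]
    exact continuous_const.mul (continuous_finsetSum _ fun p _ => hVc.comp (hlc p))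
  have Qc : Continuous Q := by
    rw [show Q = fun x => 1 / 2 * ∑ p ∈ P, c * (l p x) ^ 2 / 2 from funext hQ]
    exact continuous_const.mul (continuous_finsetSum _ fun p _ =>
      (continuous_const.mul ((hlc p).pow 2)).div_const _)
  have Hb : ∀ x, 1 / 2 * ∑ p ∈ P, V 0 + (1 / (4 * c) * δ) * ∑ j, x j ^ 2 ≤ H x := by
    intro x
    have h1 : ∑ p ∈ P, (V 0 + 1 / c * (l p x) ^ 2 / 2) ≤ ∑ p ∈ P, V (l p x) :=
      Finset.sum_le_sum fun p _ => aux_lower (1 / c) V hV heven hlb _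
    rw [Finset.sum_add_distrib, ← Finset.sum_div, ← Finset.mul_sum] at h1
    have h2 := mul_le_mul_of_nonneg_left (hco x) (show 0 ≤ 1 / (4 * c) by positivity)
    rw [hH]
    have h3 : 1 / (4 * c) * ∑ p ∈ P, (l p x) ^ 2 = 1 / 2 * (1 / c * (∑ p ∈ P, (l p x) ^ 2) / 2) := by
      field_simp; ring
    rw [h3] at h2
    linarith
  have Qb : ∀ x, 0 + (c / 4 * δ) * ∑ j, x j ^ 2 ≤ Q x := by
    intro x
    have h2 := mul_le_mul_of_nonneg_left (hco x) (show 0 ≤ c / 4 by positivity)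
    rw [hQ, ← Finset.sum_div, ← Finset.mul_sum]
    linarith
  have I : ∀ (F : (ι → ℝ) → ℝ) (K ε : ℝ), Continuous F → 0 < ε →
      (∀ x, K + ε * ∑ j, x j ^ 2 ≤ F x) →
      Integrable (fun x : ι → ℝ => Real.exp (- F x)) ∧
      Integrable (fun x : ι → ℝ => x i * Real.exp (- F x)) ∧
      Integrable (fun x : ι → ℝ => x i ^ 2 * Real.exp (- F x)) := by
    intro F K ε hF hε hb
    refine ⟨?_, ?_, ?_⟩
    · simpa using aux_integrable F i hF K ε hε hb (fun _ => 1) continuous_const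
        (fun x => by simpa using sq_nonneg (x i))
    · exact aux_integrable F i hF K ε hε hb (fun x => x i) (by fun_prop)
        (fun x => by rw [abs_le]; constructor <;> nlinarith [sq_nonneg (x i - 1), sq_nonneg (x i + 1)])
    · exact aux_integrable F i hF K ε hε hb (fun x => x i ^ 2) (by fun_prop)
        (fun x => by rw [abs_of_nonneg (sq_nonneg _)]; linarith)
  obtain ⟨IH0, IH1, IH2⟩ := I H _ _ Hc (by positivity) Hb
  obtain ⟨IQ0, -, IQ2⟩ := I Q _ _ Qc (by positivity) Qb
  have mean : (∫ x : ι → ℝ, x i * Real.exp (- H x)) = 0 := by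
    have h1 := integral_neg_eq_self (fun x : ι → ℝ => x i * Real.exp (- H x)) volume
    have h2 : ∀ x, H (-x) = H x := by intro x; simp [hH, heven]
    simp only [Pi.neg_apply, h2, neg_mul, integral_neg] at h1
    linarith
  refine ⟨mean, ?_⟩
  -- the Green function
  let B : (ι → ℝ) →ₗ[ℝ] Module.Dual ℝ (ι → ℝ) :=
    ∑ p ∈ P, (c / 2) • (l p).smulRight (l p)
  have hB : ∀ x y, B x y = ∑ p ∈ P, c / 2 * (l p x * l p y) := by
    intro x y
    simp [B, LinearMap.sum_apply]
  have hinj : Function.Injective B := by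
    rw [injective_iff_map_eq_zero]
    intro x hx
    have h1 : B x x = 0 := by rw [hx]; rfl
    rw [hB, ← Finset.mul_sum] at h1
    have h2 : ∑ p ∈ P, l p x * l p x = 0 := by
      rcases mul_eq_zero.1 h1 with h | h
      · linarith
      · exact h
    have h3 := hco x
    simp only [pow_two] at h3
    rw [h2] at h3
    have h4 : ∑ j, x j * x j ≤ 0 := by
      by_contra hcon
      push Not at hcon
      nlinarith [mul_pos hδ hcon]
    funext j
    have h5 := Finset.single_le_sum (f := fun j => x j * x j) (fun j _ => mul_self_nonneg _)
      (Finset.mem_univ j)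
    have h6 : x j * x j = 0 := le_antisymm (h5.trans h4) (mul_self_nonneg _)
    simpa using h6
  have hsurj : Function.Surjective B :=
    (LinearMap.injective_iff_surjective_of_finrank_eq_finrank
      (Subspace.dual_finrank_eq (K := ℝ) (V := ι → ℝ)).symm).1 hinj
  obtain ⟨v, hv⟩ := hsurj (LinearMap.proj i)
  have hvx : ∀ x : ι → ℝ, ∑ p ∈ P, c / 2 * (l p v * l p x) = x i := by
    intro x; rw [← hB, hv]; rfl
  have lower := aux_key_lower H i v IH0 IH1 IH2 mean (by
    intro h x
    rw [← hvx v, hH, hH, hH, Finset.mul_sum, Finset.mul_sum, Finset.mul_sum, Finset.mul_sum,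
      Finset.mul_sum, ← Finset.sum_add_distrib, ← Finset.sum_sub_distrib]
    refine Finset.sum_le_sum fun p _ => ?_
    have := aux_second_diff c V hV hub (l p x) (h * l p v)
    simp only [map_add, map_smul, smul_eq_mul, neg_mul, ← sub_eq_add_neg]
    nlinarith)
  have upper := aux_gauss_upper Q i v IQ0 IQ2 (by
    intro h x
    rw [← hvx v, ← hvx x, hQ, hQ, Finset.mul_sum, Finset.mul_sum, Finset.mul_sum, Finset.mul_sum,
      ← Finset.sum_add_distrib, ← Finset.sum_add_distrib]
    refine Finset.sum_congr rfl fun p _ => ?_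
    simp only [map_add, map_smul, smul_eq_mul]
    ring)
  have ZH : 0 < ∫ x : ι → ℝ, Real.exp (- H x) := integral_exp_pos IH0
  have ZQ : 0 < ∫ x : ι → ℝ, Real.exp (- Q x) := integral_exp_pos IQ0
  exact ((div_le_iff₀ ZQ).2 upper).trans ((le_div_iff₀ ZH).2 lower)

lemma aux_pairs_finite (A : Set Site) (hAc : (Aᶜ : Set Site).Finite) :
    {p : Site × Site | adj p.1 p.2 ∧ (p.1 ∉ A ∨ p.2 ∉ A)}.Finite := by
  have hbox : (Set.Icc (-1 : ℤ) 1 ×ˢ Set.Icc (-1 : ℤ) 1).Finite :=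
    (Set.finite_Icc _ _).prod (Set.finite_Icc _ _)
  have hp := hAc.prod hbox
  refine ((hp.image (fun q : Site × Site => (q.1, q.1 + q.2))).union
    (hp.image (fun q : Site × Site => (q.1 + q.2, q.1)))).subset ?_
  rintro ⟨i, j⟩ ⟨hadj, h⟩
  simp only [adj, dist1] at hadj
  rcases h with h | h
  · left
    refine ⟨(i, j - i), ⟨h, ?_⟩, by simp⟩
    simp only [Set.mem_prod, Set.mem_Icc, Prod.fst_sub, Prod.snd_sub]
    omega
  · right
    refine ⟨(j, i - j), ⟨h, ?_⟩, by simp⟩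
    simp only [Set.mem_prod, Set.mem_Icc, Prod.fst_sub, Prod.snd_sub]
    omega

lemma aux_ham (V : ℝ → ℝ) (A : Set Site) (hAc : (Aᶜ : Set Site).Finite) (φ : Site → ℝ) :
    ham V A φ = 1 / 2 * ∑ p ∈ (aux_pairs_finite A hAc).toFinset, V (φ p.1 - φ p.2) := by
  unfold ham
  congr 1
  rw [finsum_eq_sum_of_support_subset (s := (aux_pairs_finite A hAc).toFinset)]
  · refine Finset.sum_congr rfl fun p hp => ?_
    rw [Set.Finite.mem_toFinset] at hp
    exact if_pos hp
  · intro p hp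
    rw [Finset.mem_coe, Set.Finite.mem_toFinset]
    by_contra hcon
    exact hp (if_neg hcon)

/-- The gradient along a pair, as a linear functional of the configuration. -/
noncomputable def auxGrad (A : Set Site) (p : Site × Site) : (↥(Aᶜ) → ℝ) →ₗ[ℝ] ℝ where
  toFun η := extZ A η p.1 - extZ A η p.2
  map_add' x y := by
    simp only [extZ, Pi.add_apply]
    split_ifs <;> ring
  map_smul' a x := by
    simp only [extZ, Pi.smul_apply, smul_eq_mul, RingHom.id_apply]
    split_ifs <;> ring

lemma aux_coercive (A : Set Site) (hAc : (Aᶜ : Set Site).Finite) [Fintype ↥(Aᶜ)] :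
    ∃ δ : ℝ, 0 < δ ∧ ∀ x : ↥(Aᶜ) → ℝ, δ * ∑ j, x j ^ 2 ≤
      ∑ p ∈ (aux_pairs_finite A hAc).toFinset, (auxGrad A p x) ^ 2 := by
  obtain ⟨N, hN⟩ : ∃ N : ℕ, ∀ i ∈ Aᶜ, i + ((N : ℤ), (0 : ℤ)) ∈ A := by
    obtain ⟨b, hb⟩ := (hAc.image (fun i : Site => i.1)).bddAbove
    obtain ⟨a, ha⟩ := (hAc.image (fun i : Site => i.1)).bddBelow
    refine ⟨(b - a).toNat + 1, fun i hi => ?_⟩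
    by_contra hcon
    have h1 := hb ⟨_, hcon, rfl⟩
    have h2 := ha ⟨_, hi, rfl⟩
    simp only [Prod.fst_add] at h1 h2
    push_cast at h1
    have := Int.self_le_toNat (b - a)
    linarith
  have key : ∀ (x : ↥(Aᶜ) → ℝ) (j : ↥(Aᶜ)), x j ^ 2 ≤ (N : ℝ) * (N *
      ∑ p ∈ (aux_pairs_finite A hAc).toFinset, (auxGrad A p x) ^ 2) := by
    intro x j
    set S := ∑ p ∈ (aux_pairs_finite A hAc).toFinset, (auxGrad A p x) ^ 2 with hS
    let f : ℕ → ℝ := fun k => extZ A x (j.1 + ((k : ℤ), (0 : ℤ)))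
    have h0 : f 0 = x j := by
      have hz : j.1 + (((0 : ℕ) : ℤ), (0 : ℤ)) = j.1 := by ext <;> simp
      simp only [f, hz, extZ]
      rw [dif_pos j.2]
    have h1 : f N = 0 := by
      simp only [f, extZ]
      exact dif_neg (fun h => h (hN j.1 j.2))
    have h2 : x j = ∑ k ∈ Finset.range N, (f k - f (k + 1)) := by
      rw [Finset.sum_range_sub', h0, h1, sub_zero]
    have h3 : ∀ k, (f k - f (k + 1)) ^ 2 ≤ S := by
      intro k
      let p : Site × Site := (j.1 + ((k : ℤ), (0 : ℤ)), j.1 + (((k + 1 : ℕ) : ℤ), (0 : ℤ)))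
      have e : f k - f (k + 1) = auxGrad A p x := rfl
      rw [e]
      by_cases hp : p ∈ (aux_pairs_finite A hAc).toFinset
      · exact Finset.single_le_sum (f := fun p => (auxGrad A p x) ^ 2)
          (fun p _ => sq_nonneg _) hp
      · have hp2 : p.1 ∈ A ∧ p.2 ∈ A := by
          rw [Set.Finite.mem_toFinset] at hp
          by_contra hcon
          refine hp ⟨?_, by tauto⟩
          simp [adj, dist1, p]
        have : auxGrad A p x = 0 := by
          change extZ A x p.1 - extZ A x p.2 = 0
          simp [extZ, hp2.1, hp2.2]
        rw [this]
        simpa using Finset.sum_nonneg fun p _ => sq_nonneg _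
    rw [h2]
    have h4 := sq_sum_le_card_mul_sum_sq (s := Finset.range N) (f := fun k => f k - f (k + 1))
    have h5 : ∑ k ∈ Finset.range N, (f k - f (k + 1)) ^ 2 ≤ N * S := by
      have := Finset.sum_le_card_nsmul (Finset.range N) (fun k => (f k - f (k + 1)) ^ 2) S
        (fun k _ => h3 k)
      simpa using this
    rw [Finset.card_range] at h4
    exact h4.trans (mul_le_mul_of_nonneg_left h5 (Nat.cast_nonneg _))
  set C : ℝ := (Fintype.card ↥(Aᶜ) : ℝ) * (N * N) with hC
  have hC0 : 0 ≤ C := by positivity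
  refine ⟨1 / (C + 1), by positivity, fun x => ?_⟩
  set S := ∑ p ∈ (aux_pairs_finite A hAc).toFinset, (auxGrad A p x) ^ 2 with hS
  have hS0 : 0 ≤ S := Finset.sum_nonneg fun p _ => sq_nonneg _
  have h1 := Finset.sum_le_card_nsmul Finset.univ (fun j => x j ^ 2) _ (fun j _ => key x j)
  rw [nsmul_eq_mul, Finset.card_univ] at h1
  rw [one_div, inv_mul_le_iff₀ (by positivity)]
  have : (Fintype.card ↥(Aᶜ) : ℝ) * (N * (N * S)) = C * S := by rw [hC]; ring
  linarith

/-- reverse Brascamp–Lieb, [DGI]: the variance of `φ_0` under `ℙ_A`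
dominates the variance under the Gaussian measure with potential `c_V t²/2`. -/
theorem statement17
    (c_V : ℝ) (hcV : 1 ≤ c_V) (V : ℝ → ℝ)
    (hVsmooth : ContDiff ℝ (⊤ : ℕ∞) V) (hVeven : ∀ t, V (-t) = V t)
    (hVlb : ∀ t, 1 / c_V ≤ iteratedDeriv 2 V t)
    (hVub : ∀ t, iteratedDeriv 2 V t ≤ c_V)
    (A : Set Site) (hAc : (Aᶜ : Set Site).Finite) (h0 : (0 : Site) ∉ A) :
    gibbsExp (fun t => c_V * t ^ 2 / 2) A (fun φ => (φ 0) ^ 2)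
        - (gibbsExp (fun t => c_V * t ^ 2 / 2) A (fun φ => φ 0)) ^ 2
      ≤ gibbsExp V A (fun φ => (φ 0) ^ 2) - (gibbsExp V A (fun φ => φ 0)) ^ 2 := by
  letI : Fintype ↥(Aᶜ) := hAc.fintype
  obtain ⟨δ, hδ, hco⟩ := aux_coercive A hAc
  obtain ⟨hm, hmain⟩ := aux_abstract (aux_pairs_finite A hAc).toFinset (auxGrad A) δ hδ hco
    c_V hcV V hVsmooth hVeven hVlb hVub ⟨0, h0⟩
    (fun η => ham V A (extZ A η)) (fun η => ham (fun t => c_V * t ^ 2 / 2) A (extZ A η))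
    (fun x => aux_ham V A hAc _) (fun x => aux_ham _ A hAc _)
  have e0 : ∀ η : ↥(Aᶜ) → ℝ, extZ A η 0 = η ⟨0, h0⟩ := fun η => dif_pos h0
  have g1 : gibbsExp V A (fun φ => φ 0) = 0 := by
    simp only [gibbsExp, dif_pos hAc, e0]
    rw [hm, zero_div]
  have g2 : gibbsExp (fun t => c_V * t ^ 2 / 2) A (fun φ => (φ 0) ^ 2) ≤
      gibbsExp V A (fun φ => (φ 0) ^ 2) := by
    simp only [gibbsExp, Zpart, dif_pos hAc, e0]
    exact hmain
  rw [g1]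
  nlinarith [sq_nonneg (gibbsExp (fun t => c_V * t ^ 2 / 2) A (fun φ => φ 0))]

end DeltaPinning
end
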